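/- Let α ∈ [1/2,1) and let σ_AB, P_AB be density operators, ε > 0, and μ_B, ν_B density operators. Define θ_B := (1/(1+ε)) μ_B + (ε/(1+ε)) ν_B. Then tr((θ_B^{-α'/2}(σ_AB + ε P_AB)θ_B^{-α'/2})^α) ≥ (1+ε)^{α-1} [tr((μ_B^{-α'/2} σ_AB μ_B^{-α'/2})^α) + ε · tr((ν_B^{-α'/2} P_AB ν_B^{-α'/2})^α)]. -/

import Mathlib

open Matrix MeasureTheory
open scoped Kronecker ComplexOrder

noncomputable def mpow {n : Type*} [Fintype n] [DecidableEq n]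
    (A : Matrix n n ℂ) (p : ℝ) : Matrix n n ℂ :=
  if hA : A.IsHermitian then
    (hA.eigenvectorUnitary : Matrix n n ℂ) *
      Matrix.diagonal (fun i => ((hA.eigenvalues i ^ p : ℝ) : ℂ)) *
      (star (hA.eigenvectorUnitary : Matrix n n ℂ))
  else 0

noncomputable def traceNorm {n : Type*} [Fintype n] [DecidableEq n]
    (A : Matrix n n ℂ) : ℝ :=
  (mpow (Aᴴ * A) (1/2)).trace.re

def IsDensity {n : Type*} [Fintype n] [DecidableEq n] (ρ : Matrix n n ℂ) : Prop :=
  ρ.PosSemidef ∧ ρ.trace = 1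

noncomputable def sandTr {a b : Type*} [Fintype a] [DecidableEq a] [Fintype b] [DecidableEq b]
    (α : ℝ) (ρ : Matrix (a × b) (a × b) ℂ) (η : Matrix b b ℂ) : ℝ :=
  (mpow (((1 : Matrix a a ℂ) ⊗ₖ mpow η ((1 - α)/(2*α))) * ρ *
      ((1 : Matrix a a ℂ) ⊗ₖ mpow η ((1 - α)/(2*α)))) α).trace.re

noncomputable def Hcond {a b : Type*} [Fintype a] [DecidableEq a] [Fintype b] [DecidableEq b]
    (α : ℝ) (ρ : Matrix (a × b) (a × b) ℂ) : ℝ :=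
  ⨆ η : {η : Matrix b b ℂ // IsDensity η}, (1/(1-α)) * Real.logb 2 (sandTr α ρ η)

/-! The functional `(M, N) ↦ tr ((N^r M N^r)^α)`, `r = (1 - α) / (2α)`, is homogeneous of degree
one, so the bound says that it is superadditive. Young's inequality in the eigenvalues gives
`tr ((Wᴴ M W)^α) = min_H [α tr (M (H Hᴴ)⁻¹) + (1 - α) tr ((Hᴴ W Wᴴ H)^(α / (1 - α)))]`
over invertible `H`. For `W = N^r` the first term is linear in `M` and the second one is
`tr ((Hᴴ N^s H)^(1 / s))` with `s = (1 - α) / α`, superadditive in `N` by Epstein's theorem because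
`α ≥ 1 / 2` makes `s ≤ 1`; a minimum of superadditive functionals is superadditive, and singular
matrices are reached by continuity.

Epstein's theorem follows from Lieb's through `tr (Z X^(1 - s)) ≤ s tr Z^(1 / s) + (1 - s) tr X`,
with equality at `X = Z^(1 / s)`. For Lieb's theorem, an integral representation of `x ↦ x^s` turns
`tr (Kᴴ A^s K B^(1 - s))` into a weighted integral over `t > 0` of
`min_Y [t⁻¹ tr ((K - Y)ᴴ A (K - Y)) + tr (Yᴴ Y B)]`, a minimum of functionals linear in `(A, B)`. -/

noncomputable section

open scoped MatrixOrder

section RealPowers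

variable {m n : Type*} [Fintype m] [DecidableEq m] [Fintype n] [DecidableEq n]

lemma mpow_eq_cfc {A : Matrix n n ℂ} (hA : A.IsHermitian) (p : ℝ) :
    mpow A p = cfc (· ^ p : ℝ → ℝ) A := by
  rw [hA.cfc_eq, mpow, dif_pos hA, IsHermitian.cfc, Unitary.conjStarAlgAut_apply]
  rfl

lemma mpow_eq_rpow {A : Matrix n n ℂ} (hA : A.PosSemidef) (p : ℝ) : mpow A p = A ^ p := by
  rw [mpow_eq_cfc hA.isHermitian, CFC.rpow_eq_cfc_real hA.nonneg]

lemma posSemidef_rpow (A : Matrix n n ℂ) (p : ℝ) : (A ^ p).PosSemidef :=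
  CFC.rpow_nonneg.posSemidef

lemma posDef_rpow {A : Matrix n n ℂ} (hA : A.PosDef) (p : ℝ) : (A ^ p).PosDef :=
  (hA.isStrictlyPositive.rpow (a := A) p).posDef

lemma rpow_add_of_nonneg (A : Matrix n n ℂ) {p q : ℝ} (hp : 0 ≤ p) (hq : 0 ≤ q) :
    A ^ (p + q) = A ^ p * A ^ q := by
  simp only [CFC.rpow_def]
  rw [← cfc_mul _ _ A (NNReal.continuous_rpow_const hp).continuousOn
    (NNReal.continuous_rpow_const hq).continuousOn]
  exact cfc_congr fun x _ => NNReal.rpow_add_of_nonneg x hp hq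

lemma smul_rpow {A : Matrix n n ℂ} (hA : A.PosSemidef) {c : ℝ} (hc : 0 ≤ c) (p : ℝ) :
    (c • A) ^ p = c ^ p • A ^ p := by
  have hcont (f : ℝ → ℝ) : ContinuousOn f (spectrum ℝ A) := A.finite_real_spectrum.continuousOn f
  rw [CFC.rpow_eq_cfc_real (hA.smul hc).nonneg, CFC.rpow_eq_cfc_real hA.nonneg,
    ← cfc_smul (c ^ p) _ A (hcont _),
    ← cfc_comp_smul c _ A ((A.finite_real_spectrum.image _).continuousOn _)
      hA.isHermitian.isSelfAdjoint]
  exact cfc_congr fun x hx => Real.mul_rpow hc (spectrum_nonneg_of_nonneg hA.nonneg hx)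

open scoped Matrix.Norms.L2Operator in
lemma continuous_rpow {T : Type*} [TopologicalSpace T] {X : T → Matrix n n ℂ} (hX : Continuous X)
    (hX0 : ∀ t, (X t).PosSemidef) {p : ℝ} (hp : 0 ≤ p) : Continuous fun t => X t ^ p :=
  hX.cfc_nnreal_of_mem_nhdsSet (s := Set.univ) (fun x : NNReal => x ^ p) Filter.univ_mem
    (fun t => (hX0 t).nonneg) (NNReal.continuous_rpow_const hp).continuousOn

lemma trace_cfc {A : Matrix n n ℂ} (hA : A.IsHermitian) (f : ℝ → ℝ) :
    (cfc f A).trace = ∑ i, (f (hA.eigenvalues i) : ℂ) := by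
  rw [hA.cfc_eq, IsHermitian.cfc, Unitary.conjStarAlgAut_apply, trace_mul_comm, ← mul_assoc,
    Unitary.coe_star_mul_self, one_mul, trace_diagonal]
  rfl

lemma trace_cfc_mul_comm {C D : Matrix n n ℂ} (hCD : (C * D).IsHermitian)
    (hDC : (D * C).IsHermitian) (f : ℝ → ℝ) : (cfc f (C * D)).trace = (cfc f (D * C)).trace := by
  rw [trace_cfc hCD, trace_cfc hDC,
    (hCD.eigenvalues_eq_eigenvalues_iff hDC).mpr (charpoly_mul_comm C D)]

lemma rpow_neg_one {A : Matrix n n ℂ} (hA : A.PosDef) : A ^ (-1 : ℝ) = A⁻¹ := by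
  rw [nonsing_inv_eq_ringInverse, CFC.inverse_eq_rpow_neg_one hA.isStrictlyPositive]

/-- The ampliation `A ↦ 1 ⊗ₖ A` as a star algebra homomorphism over `ℝ`, through which the real
continuous functional calculus is transported. -/
def oneKroneckerHom (m n : Type*) [Fintype m] [DecidableEq m] [Fintype n] [DecidableEq n] :
    Matrix n n ℂ →⋆ₐ[ℝ] Matrix (m × n) (m × n) ℂ where
  toFun A := 1 ⊗ₖ A
  map_one' := one_kronecker_one
  map_mul' A B := by rw [← mul_kronecker_mul, one_mul]
  map_zero' := kronecker_zero _
  map_add' := kronecker_add _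
  commutes' r := by simp [Algebra.algebraMap_eq_smul_one, kronecker_smul]
  map_star' A := by simp [star_eq_conjTranspose, conjTranspose_kronecker]

lemma one_kronecker_rpow {A : Matrix n n ℂ} (hA : A.PosSemidef) (p : ℝ) :
    (1 : Matrix m m ℂ) ⊗ₖ (A ^ p) = (1 ⊗ₖ A) ^ p := by
  have hcont : Continuous (oneKroneckerHom m n) :=
    continuous_matrix fun i j =>
      continuous_const.mul (continuous_id.matrix_elem i.2 j.2)
  have hK := (PosSemidef.one (n := m) (R := ℂ)).kronecker hA
  rw [CFC.rpow_eq_cfc_real hA.nonneg, CFC.rpow_eq_cfc_real hK.nonneg]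
  exact (oneKroneckerHom m n).map_cfc (fun x : ℝ => x ^ p) A
    (A.finite_real_spectrum.continuousOn _) hcont hA.isHermitian hK.isHermitian

end RealPowers

section TraceFormula

variable {m n : Type*} [Fintype m] [DecidableEq m] [Fintype n] [DecidableEq n]
  {A : Matrix m m ℂ} {B : Matrix n n ℂ}

/-- The matrix of `K` with respect to the eigenbases of `A` (rows) and `B` (columns), in which
traces of functions of `A` and `B` become weighted sums of squared moduli. -/
def inEigenbases (hA : A.IsHermitian) (hB : B.IsHermitian) (K : Matrix m n ℂ) : Matrix m n ℂ :=
  star (hA.eigenvectorUnitary : Matrix m m ℂ) * K * (hB.eigenvectorUnitary : Matrix n n ℂ)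

lemma inEigenbases_sub (hA : A.IsHermitian) (hB : B.IsHermitian) (K L : Matrix m n ℂ) :
    inEigenbases hA hB (K - L) = inEigenbases hA hB K - inEigenbases hA hB L := by
  simp only [inEigenbases, Matrix.mul_sub, Matrix.sub_mul]

lemma inEigenbases_surjective (hA : A.IsHermitian) (hB : B.IsHermitian) :
    Function.Surjective (inEigenbases hA hB) := fun L => by
  refine ⟨(hA.eigenvectorUnitary : Matrix m m ℂ) * L *
    star (hB.eigenvectorUnitary : Matrix n n ℂ), ?_⟩
  rw [inEigenbases, Matrix.mul_assoc _ L, ← Matrix.mul_assoc (star _), Matrix.mul_assoc,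
    Matrix.mul_assoc L, Unitary.coe_star_mul_self, Unitary.coe_star_mul_self, Matrix.one_mul,
    Matrix.mul_one]

lemma re_trace_conj_cfc_mul_cfc (hA : A.IsHermitian) (hB : B.IsHermitian) (K : Matrix m n ℂ)
    (f g : ℝ → ℝ) :
    (Kᴴ * cfc f A * K * cfc g B).trace.re =
      ∑ i, ∑ j, f (hA.eigenvalues i) * g (hB.eigenvalues j) *
        Complex.normSq (inEigenbases hA hB K i j) := by
  have hdiag : (Kᴴ * cfc f A * K * cfc g B).trace =
      ((inEigenbases hA hB K)ᴴ * diagonal (fun i => (f (hA.eigenvalues i) : ℂ)) *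
        inEigenbases hA hB K * diagonal (fun j => (g (hB.eigenvalues j) : ℂ))).trace := by
    rw [hA.cfc_eq, hB.cfc_eq, IsHermitian.cfc, IsHermitian.cfc, Unitary.conjStarAlgAut_apply,
      Unitary.conjStarAlgAut_apply, ← Matrix.mul_assoc, ← Matrix.mul_assoc, trace_mul_comm]
    simp only [inEigenbases, conjTranspose_mul, star_eq_conjTranspose, conjTranspose_conjTranspose,
      Matrix.mul_assoc]
    rfl
  rw [hdiag, trace, Finset.sum_comm, Complex.re_sum]
  refine Finset.sum_congr rfl fun j _ => ?_
  rw [diag_apply, mul_diagonal, mul_apply, Finset.sum_mul, Complex.re_sum]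
  refine Finset.sum_congr rfl fun i _ => ?_
  rw [mul_diagonal, conjTranspose_apply, mul_right_comm _ (f _ : ℂ), ← starRingEnd_apply,
    ← Complex.normSq_eq_conj_mul_self]
  norm_cast
  ring

lemma re_trace_conj_cfc (hA : A.IsHermitian) (hB : B.IsHermitian) (K : Matrix m n ℂ) (f : ℝ → ℝ) :
    (Kᴴ * cfc f A * K).trace.re =
      ∑ i, ∑ j, f (hA.eigenvalues i) * Complex.normSq (inEigenbases hA hB K i j) := by
  simpa [cfc_const_one ℝ B hB.isSelfAdjoint] using re_trace_conj_cfc_mul_cfc hA hB K f fun _ => 1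

lemma re_trace_gram_mul_cfc (hA : A.IsHermitian) (hB : B.IsHermitian) (K : Matrix m n ℂ)
    (g : ℝ → ℝ) :
    (Kᴴ * K * cfc g B).trace.re =
      ∑ i, ∑ j, g (hB.eigenvalues j) * Complex.normSq (inEigenbases hA hB K i j) := by
  simpa [cfc_const_one ℝ A hA.isSelfAdjoint] using re_trace_conj_cfc_mul_cfc hA hB K (fun _ => 1) g

lemma re_trace_cfc_mul_cfc_le {A B : Matrix n n ℂ} (hA : A.IsHermitian) (hB : B.IsHermitian)
    {f g f' g' : ℝ → ℝ} (h : ∀ i j, f (hA.eigenvalues i) * g (hB.eigenvalues j) ≤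
      f' (hA.eigenvalues i) + g' (hB.eigenvalues j)) :
    (cfc f A * cfc g B).trace.re ≤ (cfc f' A).trace.re + (cfc g' B).trace.re := by
  have hfg := re_trace_conj_cfc_mul_cfc hA hB 1 f g
  have hf := re_trace_conj_cfc hA hB 1 f'
  have hg := re_trace_gram_mul_cfc hA hB 1 g'
  simp only [conjTranspose_one, Matrix.one_mul, Matrix.mul_one] at hfg hf hg
  simp_rw [hfg, hf, hg, ← Finset.sum_add_distrib, ← add_mul]
  gcongr with i _ j _
  · exact Complex.normSq_nonneg _
  · exact h i j

lemma mul_rpow_one_sub_le {s x y : ℝ} (hs : s ∈ Set.Ioc (0 : ℝ) 1) (hx : 0 ≤ x) (hy : 0 ≤ y) :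
    x * y ^ (1 - s) ≤ s * x ^ (1 / s) + (1 - s) * y := by
  have := Real.geom_mean_le_arith_mean2_weighted hs.1.le (sub_nonneg.mpr hs.2)
    (Real.rpow_nonneg hx (1 / s)) hy (add_sub_cancel s 1)
  rwa [← Real.rpow_mul hx, one_div_mul_cancel hs.1.ne', Real.rpow_one] at this

lemma rpow_le_mul_inv_add_rpow {α x y : ℝ} (hα : α ∈ Set.Ioo (0 : ℝ) 1) (hx : 0 ≤ x)
    (hy : 0 < y) : x ^ α ≤ α * (x * y⁻¹) + (1 - α) * y ^ (α / (1 - α)) := by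
  have h1α : 0 < 1 - α := sub_pos.mpr hα.2
  have := Real.geom_mean_le_arith_mean2_weighted hα.1.le h1α.le
    (mul_nonneg hx (inv_nonneg.mpr hy.le)) (Real.rpow_nonneg hy.le (α / (1 - α)))
    (add_sub_cancel α 1)
  rwa [← Real.rpow_mul hy.le, div_mul_cancel₀ _ h1α.ne', ← Real.mul_rpow (by positivity) hy.le,
    inv_mul_cancel_right₀ hy.ne'] at this

lemma re_trace_mul_rpow_one_sub_le {Z X : Matrix n n ℂ} (hZ : Z.PosSemidef) (hX : X.PosSemidef)
    {s : ℝ} (hs : s ∈ Set.Ioc (0 : ℝ) 1) :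
    (Z * X ^ (1 - s)).trace.re ≤ s * (Z ^ (1 / s)).trace.re + (1 - s) * X.trace.re := by
  have h := re_trace_cfc_mul_cfc_le hZ.isHermitian hX.isHermitian (f := id)
    (g := fun y => y ^ (1 - s)) (f' := fun x => s * x ^ (1 / s)) (g' := fun y => (1 - s) * y)
    fun i j => mul_rpow_one_sub_le hs (hZ.eigenvalues_nonneg i) (hX.eigenvalues_nonneg j)
  rw [cfc_id ℝ Z hZ.isHermitian.isSelfAdjoint,
    cfc_const_mul_id (1 - s) X hX.isHermitian.isSelfAdjoint,
    cfc_const_mul s _ Z (Z.finite_real_spectrum.continuousOn _), ← CFC.rpow_eq_cfc_real hZ.nonneg,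
    ← CFC.rpow_eq_cfc_real hX.nonneg] at h
  simpa using h

lemma re_trace_rpow_le {X G : Matrix n n ℂ} (hX : X.PosSemidef) (hG : G.PosDef) {α : ℝ}
    (hα : α ∈ Set.Ioo (0 : ℝ) 1) :
    (X ^ α).trace.re ≤ α * (X * G⁻¹).trace.re + (1 - α) * (G ^ (α / (1 - α))).trace.re := by
  have h := re_trace_cfc_mul_cfc_le hX.isHermitian hG.isHermitian (f := fun x => -α * x)
    (g := fun y => y ^ (-1 : ℝ)) (f' := fun x => -1 * x ^ α)
    (g' := fun y => (1 - α) * y ^ (α / (1 - α))) fun i j => by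
      have := rpow_le_mul_inv_add_rpow hα (hX.eigenvalues_nonneg i) (hG.eigenvalues_pos j)
      simp only [Real.rpow_neg_one]
      linarith
  have hG0 := hG.posSemidef.nonneg
  rw [cfc_const_mul_id (-α) X hX.isHermitian.isSelfAdjoint,
    cfc_const_mul _ _ X (X.finite_real_spectrum.continuousOn _),
    cfc_const_mul _ _ G (G.finite_real_spectrum.continuousOn _),
    ← CFC.rpow_eq_cfc_real hX.nonneg, ← CFC.rpow_eq_cfc_real hG0, ← CFC.rpow_eq_cfc_real hG0,
    rpow_neg_one hG] at h
  simp only [smul_mul_assoc, trace_smul, Complex.smul_re, smul_eq_mul] at h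
  linarith

lemma re_trace_rpow_eq {X : Matrix n n ℂ} (hX : X.PosDef) {α : ℝ} (hα : α ∈ Set.Ioo (0 : ℝ) 1) :
    (X ^ α).trace.re = α * (X * (X ^ (1 - α))⁻¹).trace.re +
      (1 - α) * ((X ^ (1 - α)) ^ (α / (1 - α))).trace.re := by
  have h1α : 0 < 1 - α := sub_pos.mpr hα.2
  have hinv : X * (X ^ (1 - α))⁻¹ = X ^ α := by
    nth_rewrite 1 [← CFC.rpow_one X hX.posSemidef.nonneg, ← add_sub_cancel α 1]
    rw [rpow_add_of_nonneg X hα.1.le h1α.le, mul_nonsing_inv_cancel_right _ _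
      ((isUnit_iff_isUnit_det _).mp (posDef_rpow hX _).isUnit)]
  have hpow : (X ^ (1 - α)) ^ (α / (1 - α)) = X ^ α := by
    rw [CFC.rpow_rpow_of_exponent_nonneg X _ _ h1α.le (div_pos hα.1 h1α).le hX.posSemidef.nonneg,
      mul_div_cancel₀ _ h1α.ne']
  rw [hinv, hpow]
  ring

end TraceFormula

section Lieb

variable {m n : Type*} [Fintype m] [Fintype n]
  {A A₁ A₂ : Matrix m m ℂ} {B B₁ B₂ : Matrix n n ℂ}

/-- Completes the square in `y`; for `a = b = 0` both quotients are `0 / 0 = 0`. -/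
lemma split_normSq_eq {t a b : ℝ} (ht : 0 < t) (ha : 0 ≤ a) (hb : 0 ≤ b) (k y : ℂ) :
    t⁻¹ * a * Complex.normSq (k - y) + b * Complex.normSq y =
      a * b / (a + t * b) * Complex.normSq k +
        (t⁻¹ * a + b) * Complex.normSq (y - (a / (a + t * b) : ℝ) * k) := by
  rcases (add_nonneg ha (mul_nonneg ht.le hb)).eq_or_lt with h | h
  · obtain ⟨rfl, htb⟩ := (add_eq_zero_iff_of_nonneg ha (mul_nonneg ht.le hb)).mp h.symm
    obtain rfl : b = 0 := (mul_eq_zero.mp htb).resolve_left ht.ne'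
    simp
  · simp only [Complex.normSq_apply, Complex.sub_re, Complex.sub_im, Complex.mul_re,
      Complex.mul_im, Complex.ofReal_re, Complex.ofReal_im]
    field_simp
    ring

/-- The cost, linear in `(A, B)`, of the splitting `K = (K - Y) + Y` at parameter `t`: the part
`K - Y` is charged to `A`, the part `Y` to `B`. -/
def splitCost (t : ℝ) (A : Matrix m m ℂ) (B : Matrix n n ℂ) (K Y : Matrix m n ℂ) : ℝ :=
  t⁻¹ * ((K - Y)ᴴ * A * (K - Y)).trace.re + (Yᴴ * Y * B).trace.re

/-- The least cost of a splitting of `K` (attained if `0 < t` and `A`, `B` are positive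
semidefinite). The functional of Lieb's theorem is a weighted integral over `t` of these minima. -/
def minSplitCost (t : ℝ) (A : Matrix m m ℂ) (B : Matrix n n ℂ) (K : Matrix m n ℂ) : ℝ :=
  ⨅ Y, splitCost t A B K Y

lemma splitCost_eq_sum [DecidableEq m] [DecidableEq n] (hA : A.IsHermitian) (hB : B.IsHermitian)
    (t : ℝ) (K Y : Matrix m n ℂ) :
    splitCost t A B K Y = ∑ i, ∑ j,
      (t⁻¹ * hA.eigenvalues i *
          Complex.normSq (inEigenbases hA hB K i j - inEigenbases hA hB Y i j) +
        hB.eigenvalues j * Complex.normSq (inEigenbases hA hB Y i j)) := by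
  have hsplit := re_trace_conj_cfc hA hB (K - Y) id
  have hY := re_trace_gram_mul_cfc hA hB Y id
  rw [cfc_id ℝ A hA.isSelfAdjoint] at hsplit
  rw [cfc_id ℝ B hB.isSelfAdjoint] at hY
  simp only [splitCost, hsplit, hY, inEigenbases_sub, Matrix.sub_apply, Finset.mul_sum,
    Finset.sum_add_distrib, mul_assoc, id]

lemma isLeast_splitCost [DecidableEq m] [DecidableEq n] (hA : A.PosSemidef) (hB : B.PosSemidef)
    {t : ℝ} (ht : 0 < t) (K : Matrix m n ℂ) :
    IsLeast (Set.range (splitCost t A B K)) (∑ i, ∑ j,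
      hA.isHermitian.eigenvalues i * hB.isHermitian.eigenvalues j /
        (hA.isHermitian.eigenvalues i + t * hB.isHermitian.eigenvalues j) *
        Complex.normSq (inEigenbases hA.isHermitian hB.isHermitian K i j)) := by
  have ha := hA.eigenvalues_nonneg
  have hb := hB.eigenvalues_nonneg
  constructor
  · obtain ⟨Y, hY⟩ := inEigenbases_surjective hA.isHermitian hB.isHermitian <|
      of fun i j => ((hA.isHermitian.eigenvalues i / (hA.isHermitian.eigenvalues i +
        t * hB.isHermitian.eigenvalues j) : ℝ) : ℂ) *
          inEigenbases hA.isHermitian hB.isHermitian K i j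
    refine ⟨Y, ?_⟩
    simp_rw [splitCost_eq_sum hA.isHermitian hB.isHermitian, split_normSq_eq ht (ha _) (hb _), hY,
      of_apply, sub_self, Complex.normSq_zero, mul_zero, add_zero]
  · rintro _ ⟨Y, rfl⟩
    simp_rw [splitCost_eq_sum hA.isHermitian hB.isHermitian, split_normSq_eq ht (ha _) (hb _)]
    gcongr with i _ j _
    have := ha i
    have := hb j
    exact le_add_of_nonneg_right (mul_nonneg (by positivity) (Complex.normSq_nonneg _))

lemma minSplitCost_add_le (hA₁ : A₁.PosSemidef) (hA₂ : A₂.PosSemidef) (hB₁ : B₁.PosSemidef)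
    (hB₂ : B₂.PosSemidef) {t : ℝ} (ht : 0 < t) (K : Matrix m n ℂ) :
    minSplitCost t A₁ B₁ K + minSplitCost t A₂ B₂ K ≤ minSplitCost t (A₁ + A₂) (B₁ + B₂) K := by
  classical
  have hadd (Y : Matrix m n ℂ) : splitCost t (A₁ + A₂) (B₁ + B₂) K Y =
      splitCost t A₁ B₁ K Y + splitCost t A₂ B₂ K Y := by
    simp only [splitCost, Matrix.mul_add, Matrix.add_mul, trace_add, Complex.add_re]
    ring
  refine le_ciInf fun Y => (add_le_add ?_ ?_).trans_eq (hadd Y).symm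
  · exact ciInf_le (isLeast_splitCost hA₁ hB₁ ht K).bddBelow Y
  · exact ciInf_le (isLeast_splitCost hA₂ hB₂ ht K).bddBelow Y

lemma exists_measure_rpow_mul_rpow_eq_integral {s : ℝ} (hs : s ∈ Set.Ioo (0 : ℝ) 1) :
    ∃ ξ : Measure ℝ, ∀ a b : ℝ, 0 ≤ a → 0 ≤ b →
      IntegrableOn (fun t => t ^ (s - 1) * (a * b / (a + t * b))) (Set.Ioi 0) ξ ∧
      a ^ s * b ^ (1 - s) = ∫ t in Set.Ioi 0, t ^ (s - 1) * (a * b / (a + t * b)) ∂ξ := by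
  obtain ⟨ξ, hξ⟩ := Real.exists_measure_rpow_eq_integral_rpowIntegrand₀₁ hs
  refine ⟨ξ, fun a b ha hb => ?_⟩
  rcases hb.eq_or_lt with rfl | hb
  · simp [Real.zero_rpow (sub_pos.mpr hs.2).ne']
  obtain ⟨hint, heq⟩ := hξ (a / b) (Set.mem_Ici.mpr (by positivity))
  have hscale : Set.EqOn (fun t => b * Real.rpowIntegrand₀₁ s t (a / b))
      (fun t => t ^ (s - 1) * (a * b / (a + t * b))) (Set.Ioi 0) := by
    intro t (ht : 0 < t)
    have : t + a / b ≠ 0 := by positivity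
    have : a + t * b ≠ 0 := by positivity
    have : t * b + a ≠ 0 := by positivity
    simp only [Real.rpowIntegrand₀₁]
    rw [Real.rpow_sub_one ht.ne']
    field_simp
    ring
  refine ⟨IntegrableOn.congr_fun (hint.const_mul b) hscale measurableSet_Ioi, ?_⟩
  rw [← setIntegral_congr_fun measurableSet_Ioi hscale, integral_const_mul, ← heq,
    Real.div_rpow ha hb.le, Real.rpow_sub hb, Real.rpow_one]
  ring

variable [DecidableEq m] [DecidableEq n]

variable (m n) in
lemma exists_measure_re_trace_rpow_mul_rpow_eq_integral {s : ℝ} (hs : s ∈ Set.Ioo (0 : ℝ) 1) :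
    ∃ ξ : Measure ℝ, ∀ {A : Matrix m m ℂ} {B : Matrix n n ℂ}, A.PosSemidef → B.PosSemidef →
      ∀ K : Matrix m n ℂ,
        IntegrableOn (fun t => t ^ (s - 1) * minSplitCost t A B K) (Set.Ioi 0) ξ ∧
        (Kᴴ * A ^ s * K * B ^ (1 - s)).trace.re =
          ∫ t in Set.Ioi 0, t ^ (s - 1) * minSplitCost t A B K ∂ξ := by
  obtain ⟨ξ, hξ⟩ := exists_measure_rpow_mul_rpow_eq_integral hs
  refine ⟨ξ, fun {A B} hA hB K => ?_⟩
  set a := hA.isHermitian.eigenvalues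
  set b := hB.isHermitian.eigenvalues
  set k := inEigenbases hA.isHermitian hB.isHermitian K
  have hab (i j) := hξ (a i) (b j) (hA.eigenvalues_nonneg i) (hB.eigenvalues_nonneg j)
  have hcost : Set.EqOn (fun t => t ^ (s - 1) * minSplitCost t A B K) (fun t => ∑ i, ∑ j,
      t ^ (s - 1) * (a i * b j / (a i + t * b j)) * Complex.normSq (k i j)) (Set.Ioi 0) :=
    fun t ht => by
      simp only [minSplitCost, iInf, (isLeast_splitCost hA hB ht K).csInf_eq, Finset.mul_sum,
        mul_assoc, a, b, k]
  have hint (i j) := (hab i j).1.mul_const (Complex.normSq (k i j))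
  refine ⟨IntegrableOn.congr_fun (integrable_finsetSum _ fun i _ =>
    integrable_finsetSum _ fun j _ => hint i j) hcost.symm measurableSet_Ioi, ?_⟩
  rw [setIntegral_congr_fun measurableSet_Ioi hcost, CFC.rpow_eq_cfc_real hA.nonneg,
    CFC.rpow_eq_cfc_real hB.nonneg, re_trace_conj_cfc_mul_cfc hA.isHermitian hB.isHermitian,
    integral_finsetSum _ fun i _ => integrable_finsetSum _ fun j _ => hint i j]
  refine Finset.sum_congr rfl fun i _ => ?_
  rw [integral_finsetSum _ fun j _ => hint i j]
  exact Finset.sum_congr rfl fun j _ => by rw [integral_mul_const, ← (hab i j).2]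

/-- Lieb's concavity theorem; the functional is homogeneous of degree one, so that joint concavity
amounts to superadditivity. -/
theorem re_trace_conj_rpow_mul_rpow_add_le {s : ℝ} (hs : s ∈ Set.Ioc (0 : ℝ) 1)
    (hA₁ : A₁.PosSemidef) (hA₂ : A₂.PosSemidef) (hB₁ : B₁.PosSemidef) (hB₂ : B₂.PosSemidef)
    (K : Matrix m n ℂ) :
    (Kᴴ * A₁ ^ s * K * B₁ ^ (1 - s)).trace.re + (Kᴴ * A₂ ^ s * K * B₂ ^ (1 - s)).trace.re ≤
      (Kᴴ * (A₁ + A₂) ^ s * K * (B₁ + B₂) ^ (1 - s)).trace.re := by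
  rcases hs.2.eq_or_lt with rfl | hs1
  · simp [CFC.rpow_one, CFC.rpow_zero, hA₁.nonneg, hA₂.nonneg, (hA₁.add hA₂).nonneg, hB₁.nonneg,
      hB₂.nonneg, (hB₁.add hB₂).nonneg, Matrix.mul_add, Matrix.add_mul]
  obtain ⟨ξ, hξ⟩ := exists_measure_re_trace_rpow_mul_rpow_eq_integral m n ⟨hs.1, hs1⟩
  obtain ⟨hint₁, heq₁⟩ := hξ hA₁ hB₁ K
  obtain ⟨hint₂, heq₂⟩ := hξ hA₂ hB₂ K
  obtain ⟨hint, heq⟩ := hξ (hA₁.add hA₂) (hB₁.add hB₂) K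
  rw [heq₁, heq₂, heq, ← integral_add hint₁ hint₂]
  refine setIntegral_mono_on (hint₁.add hint₂) hint measurableSet_Ioi fun t ht => ?_
  rw [← mul_add]
  exact mul_le_mul_of_nonneg_left (minSplitCost_add_le hA₁ hA₂ hB₁ hB₂ ht K)
    (Real.rpow_nonneg (le_of_lt ht) _)

end Lieb

section Epstein

variable {m n : Type*} [Fintype m] [DecidableEq m] [Fintype n] [DecidableEq n]

lemma mul_rpow_one_div_rpow_one_sub {Z : Matrix n n ℂ} (hZ : Z.PosSemidef) {s : ℝ}
    (hs : s ∈ Set.Ioc (0 : ℝ) 1) : Z * (Z ^ (1 / s)) ^ (1 - s) = Z ^ (1 / s) := by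
  have hs' : 0 ≤ 1 / s := one_div_nonneg.mpr hs.1.le
  have h1s : 0 ≤ 1 - s := sub_nonneg.mpr hs.2
  calc Z * (Z ^ (1 / s)) ^ (1 - s)
      = Z ^ (1 : ℝ) * Z ^ (1 / s * (1 - s)) := by
        rw [CFC.rpow_rpow_of_exponent_nonneg Z _ _ hs' h1s hZ.nonneg, CFC.rpow_one Z hZ.nonneg]
    _ = Z ^ (1 / s) := by
        rw [← rpow_add_of_nonneg Z zero_le_one (mul_nonneg hs' h1s), mul_one_sub,
          one_div_mul_cancel hs.1.ne', add_sub_cancel]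

/-- Epstein's concavity theorem, again as superadditivity. -/
theorem re_trace_conj_rpow_rpow_one_div_add_le {s : ℝ} (hs : s ∈ Set.Ioc (0 : ℝ) 1)
    {N₁ N₂ : Matrix m m ℂ} (hN₁ : N₁.PosSemidef) (hN₂ : N₂.PosSemidef) (K : Matrix m n ℂ) :
    ((Kᴴ * N₁ ^ s * K) ^ (1 / s)).trace.re + ((Kᴴ * N₂ ^ s * K) ^ (1 / s)).trace.re ≤
      ((Kᴴ * (N₁ + N₂) ^ s * K) ^ (1 / s)).trace.re := by
  have hconj (N : Matrix m m ℂ) : (Kᴴ * N ^ s * K).PosSemidef :=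
    (posSemidef_rpow N s).conjTranspose_mul_mul_same K
  set X₁ := (Kᴴ * N₁ ^ s * K) ^ (1 / s) with hX₁
  set X₂ := (Kᴴ * N₂ ^ s * K) ^ (1 / s) with hX₂
  have hX₁0 : X₁.PosSemidef := posSemidef_rpow _ _
  have hX₂0 : X₂.PosSemidef := posSemidef_rpow _ _
  have hlieb := re_trace_conj_rpow_mul_rpow_add_le hs hN₁ hN₂ hX₁0 hX₂0 K
  have hyoung := re_trace_mul_rpow_one_sub_le (hconj (N₁ + N₂)) (hX₁0.add hX₂0) hs
  rw [hX₁, hX₂, mul_rpow_one_div_rpow_one_sub (hconj N₁) hs,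
    mul_rpow_one_div_rpow_one_sub (hconj N₂) hs, ← hX₁, ← hX₂] at hlieb
  rw [trace_add, Complex.add_re] at hyoung
  refine le_of_mul_le_mul_left ?_ hs.1
  linarith

end Epstein

section Variational

variable {n : Type*} [Fintype n] [DecidableEq n] {M W H : Matrix n n ℂ}

lemma trace_rpow_conj_gram (W H : Matrix n n ℂ) (p : ℝ) :
    ((Wᴴ * (H * Hᴴ) * W) ^ p).trace = ((Hᴴ * (W * Wᴴ) * H) ^ p).trace := by
  have hWH (W H : Matrix n n ℂ) : (Wᴴ * (H * Hᴴ) * W).PosSemidef :=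
    (posSemidef_self_mul_conjTranspose H).conjTranspose_mul_mul_same W
  have hL : Wᴴ * (H * Hᴴ) * W = Wᴴ * H * (Hᴴ * W) := by simp only [Matrix.mul_assoc]
  have hR : Hᴴ * (W * Wᴴ) * H = Hᴴ * W * (Wᴴ * H) := by simp only [Matrix.mul_assoc]
  rw [CFC.rpow_eq_cfc_real (hWH W H).nonneg, CFC.rpow_eq_cfc_real (hWH H W).nonneg, hL, hR]
  exact trace_cfc_mul_comm (hL ▸ (hWH W H).isHermitian) (hR ▸ (hWH H W).isHermitian) _

lemma trace_conj_mul_inv_conj (M N : Matrix n n ℂ) (hW : IsUnit W) :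
    (Wᴴ * M * W * (Wᴴ * N * W)⁻¹).trace = (M * N⁻¹).trace := by
  have hdet : IsUnit W.det := (isUnit_iff_isUnit_det W).mp hW
  have hdet' : IsUnit Wᴴ.det := (isUnit_iff_isUnit_det Wᴴ).mp hW.star
  calc (Wᴴ * M * W * (Wᴴ * N * W)⁻¹).trace = (Wᴴ * (M * N⁻¹ * (Wᴴ)⁻¹)).trace := by
        rw [Matrix.mul_inv_rev, Matrix.mul_inv_rev, ← Matrix.mul_assoc,
          mul_nonsing_inv_cancel_right _ _ hdet]
        simp only [Matrix.mul_assoc]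
    _ = (M * N⁻¹).trace := by rw [trace_mul_comm, nonsing_inv_mul_cancel_right _ _ hdet']

lemma re_trace_conj_rpow_le (hM : M.PosSemidef) (hW : IsUnit W) (hH : IsUnit H) {α : ℝ}
    (hα : α ∈ Set.Ioo (0 : ℝ) 1) :
    ((Wᴴ * M * W) ^ α).trace.re ≤ α * (M * (H * Hᴴ)⁻¹).trace.re +
      (1 - α) * ((Hᴴ * (W * Wᴴ) * H) ^ (α / (1 - α))).trace.re := by
  have hG : (Wᴴ * (H * Hᴴ) * W).PosDef :=
    (PosDef.mul_conjTranspose_self H <| vecMul_injective_iff_isUnit.mpr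
      hH).conjTranspose_mul_mul_same <| mulVec_injective_iff_isUnit.mpr hW
  rw [← trace_conj_mul_inv_conj M _ hW, ← trace_rpow_conj_gram]
  exact re_trace_rpow_le (hM.conjTranspose_mul_mul_same W) hG hα

lemma exists_re_trace_conj_rpow_eq (hM : M.PosDef) (hW : IsUnit W) {α : ℝ}
    (hα : α ∈ Set.Ioo (0 : ℝ) 1) :
    ∃ H, IsUnit H ∧ ((Wᴴ * M * W) ^ α).trace.re = α * (M * (H * Hᴴ)⁻¹).trace.re +
      (1 - α) * ((Hᴴ * (W * Wᴴ) * H) ^ (α / (1 - α))).trace.re := by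
  set X := Wᴴ * M * W
  have hX : X.PosDef := hM.conjTranspose_mul_mul_same (mulVec_injective_iff_isUnit.mpr hW)
  have h1α : 0 ≤ (1 - α) / 2 := half_pos (sub_pos.mpr hα.2) |>.le
  set Y := X ^ ((1 - α) / 2) with hY
  have hYY : Y * Yᴴ = X ^ (1 - α) := by
    rw [(posSemidef_rpow X _).isHermitian.eq, hY, ← rpow_add_of_nonneg X h1α h1α, add_halves]
  have hWY : Wᴴ * ((Wᴴ)⁻¹ * Y) = Y :=
    mul_nonsing_inv_cancel_left _ _ ((isUnit_iff_isUnit_det Wᴴ).mp hW.star)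
  have hWHW : Wᴴ * ((Wᴴ)⁻¹ * Y * ((Wᴴ)⁻¹ * Y)ᴴ) * W = X ^ (1 - α) := by
    rw [← Matrix.mul_assoc, hWY, Matrix.mul_assoc, ← conjTranspose_conjTranspose W,
      ← conjTranspose_mul, conjTranspose_conjTranspose, hWY, hYY]
  refine ⟨(Wᴴ)⁻¹ * Y, (isUnit_nonsing_inv_iff.mpr hW.star).mul (posDef_rpow hX _).isUnit, ?_⟩
  rw [← trace_conj_mul_inv_conj M _ hW, ← trace_rpow_conj_gram, hWHW]
  exact re_trace_rpow_eq hX hα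

end Variational

section SandwichTrace

variable {n : Type*} [Fintype n] [DecidableEq n] {α : ℝ} {M M₁ M₂ N N₁ N₂ : Matrix n n ℂ}

/-- The sandwiched Rényi quasi-entropy `tr ((N ^ r * M * N ^ r) ^ α)` with `r = (1 - α) / (2 * α)`,
which is `-α' / 2` in the notation of the paper. Its value is real for positive semidefinite `M`. -/
def sandwichTrace (α : ℝ) (M N : Matrix n n ℂ) : ℝ :=
  ((N ^ ((1 - α) / (2 * α)) * M * N ^ ((1 - α) / (2 * α))) ^ α).trace.re

lemma one_sub_div_two_mul_nonneg (hα : α ∈ Set.Ioo (0 : ℝ) 1) : 0 ≤ (1 - α) / (2 * α) :=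
  div_nonneg (sub_nonneg.mpr hα.2.le) (mul_nonneg zero_le_two hα.1.le)

lemma posSemidef_rpow_mul_mul_rpow (hM : M.PosSemidef) (N : Matrix n n ℂ) (r : ℝ) :
    (N ^ r * M * N ^ r).PosSemidef := by
  simpa only [(posSemidef_rpow N r).isHermitian.eq] using hM.conjTranspose_mul_mul_same (N ^ r)

lemma continuous_sandwichTrace {T : Type*} [TopologicalSpace T] {X Y : T → Matrix n n ℂ}
    (hα : α ∈ Set.Ioo (0 : ℝ) 1) (hX : Continuous X) (hY : Continuous Y)
    (hX0 : ∀ t, (X t).PosSemidef) (hY0 : ∀ t, (Y t).PosSemidef) :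
    Continuous fun t => sandwichTrace α (X t) (Y t) := by
  have hr := one_sub_div_two_mul_nonneg hα
  have hYr := continuous_rpow hY hY0 hr
  exact Complex.continuous_re.comp (continuous_rpow ((hYr.matrix_mul hX).matrix_mul hYr)
    (fun t => posSemidef_rpow_mul_mul_rpow (hX0 t) _ _) hα.1.le).matrix_trace

lemma sandwichTrace_smul_smul (hα : α ∈ Set.Ioo (0 : ℝ) 1) {c d : ℝ} (hc : 0 ≤ c) (hd : 0 ≤ d)
    (hM : M.PosSemidef) (hN : N.PosSemidef) :
    sandwichTrace α (c • M) (d • N) = c ^ α * d ^ (1 - α) * sandwichTrace α M N := by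
  have hr := one_sub_div_two_mul_nonneg hα
  have hscale : (d ^ ((1 - α) / (2 * α)) * (c * d ^ ((1 - α) / (2 * α)))) ^ α =
      c ^ α * d ^ (1 - α) := by
    rw [mul_left_comm, ← Real.rpow_add_of_nonneg hd hr hr, Real.mul_rpow hc (by positivity),
      ← Real.rpow_mul hd]
    congr 2
    field_simp [hα.1.ne']
    ring
  rw [sandwichTrace, sandwichTrace, smul_rpow hN hd]
  simp only [Matrix.smul_mul, Matrix.mul_smul, smul_smul]
  rw [smul_rpow (posSemidef_rpow_mul_mul_rpow hM _ _) (by positivity), trace_smul,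
    Complex.smul_re, smul_eq_mul, hscale]

lemma sandwichTrace_add_le_of_posDef (hα : α ∈ Set.Ico (1 / 2 : ℝ) 1) (hM₁ : M₁.PosDef)
    (hM₂ : M₂.PosDef) (hN₁ : N₁.PosDef) (hN₂ : N₂.PosDef) :
    sandwichTrace α M₁ N₁ + sandwichTrace α M₂ N₂ ≤ sandwichTrace α (M₁ + M₂) (N₁ + N₂) := by
  have hα0 : 0 < α := one_half_pos.trans_le hα.1
  have hα' : α ∈ Set.Ioo (0 : ℝ) 1 := ⟨hα0, hα.2⟩
  set r := (1 - α) / (2 * α) with hr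
  set s := (1 - α) / α with hs
  have hs01 : s ∈ Set.Ioc (0 : ℝ) 1 :=
    ⟨div_pos (sub_pos.mpr hα.2) hα0, (div_le_one hα0).mpr (by linarith [hα.1])⟩
  have hr0 : 0 ≤ r := one_sub_div_two_mul_nonneg hα'
  have hherm (N : Matrix n n ℂ) : (N ^ r)ᴴ = N ^ r := (posSemidef_rpow N r).isHermitian.eq
  have hsq (N : Matrix n n ℂ) : N ^ r * (N ^ r)ᴴ = N ^ s := by
    rw [hherm, ← rpow_add_of_nonneg N hr0 hr0]
    congr 1
    rw [hr, hs]
    field_simp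
    ring
  obtain ⟨H, hH, heq⟩ := exists_re_trace_conj_rpow_eq (hM₁.add hM₂)
    (posDef_rpow (hN₁.add hN₂) r).isUnit hα'
  have h₁ := re_trace_conj_rpow_le hM₁.posSemidef (posDef_rpow hN₁ r).isUnit hH hα'
  have h₂ := re_trace_conj_rpow_le hM₂.posSemidef (posDef_rpow hN₂ r).isUnit hH hα'
  have hepstein :=
    re_trace_conj_rpow_rpow_one_div_add_le hs01 hN₁.posSemidef hN₂.posSemidef H
  rw [hs, one_div_div, ← hs] at hepstein
  rw [hsq, hherm] at heq h₁ h₂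
  rw [Matrix.add_mul M₁, trace_add, Complex.add_re] at heq
  simp only [sandwichTrace, ← hr]
  have := mul_le_mul_of_nonneg_left hepstein (sub_nonneg.mpr hα.2.le)
  linarith

theorem sandwichTrace_add_le (hα : α ∈ Set.Ico (1 / 2 : ℝ) 1) (hM₁ : M₁.PosSemidef)
    (hM₂ : M₂.PosSemidef) (hN₁ : N₁.PosSemidef) (hN₂ : N₂.PosSemidef) :
    sandwichTrace α M₁ N₁ + sandwichTrace α M₂ N₂ ≤ sandwichTrace α (M₁ + M₂) (N₁ + N₂) := by
  have hα' : α ∈ Set.Ioo (0 : ℝ) 1 := ⟨one_half_pos.trans_le hα.1, hα.2⟩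
  let shift (A : Matrix n n ℂ) (t : NNReal) : Matrix n n ℂ := A + t • 1
  have hshift (A : Matrix n n ℂ) : Continuous (shift A) := by fun_prop
  have hzero (A : Matrix n n ℂ) : shift A 0 = A := by simp [shift]
  have hpsd {A : Matrix n n ℂ} (hA : A.PosSemidef) (t : NNReal) : (shift A t).PosSemidef :=
    hA.add (PosSemidef.one.smul t.2)
  have hpd {A : Matrix n n ℂ} (hA : A.PosSemidef) {t : NNReal} (ht : 0 < t) : (shift A t).PosDef :=
    PosDef.posSemidef_add hA (PosDef.one.smul ht)
  have hlim₁ := continuous_sandwichTrace hα' (hshift M₁) (hshift N₁) (hpsd hM₁) (hpsd hN₁)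
  have hlim₂ := continuous_sandwichTrace hα' (hshift M₂) (hshift N₂) (hpsd hM₂) (hpsd hN₂)
  have hlim := continuous_sandwichTrace hα' ((hshift M₁).add (hshift M₂))
    ((hshift N₁).add (hshift N₂)) (fun t => (hpsd hM₁ t).add (hpsd hM₂ t))
    fun t => (hpsd hN₁ t).add (hpsd hN₂ t)
  have hle : ∀ t ∈ Set.Ioi (0 : NNReal), _ := fun t ht =>
    sandwichTrace_add_le_of_posDef hα (hpd hM₁ ht) (hpd hM₂ ht) (hpd hN₁ ht) (hpd hN₂ ht)
  have hle₀ := le_on_closure hle (hlim₁.add hlim₂).continuousOn hlim.continuousOn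
    (closure_Ioi (0 : NNReal) ▸ Set.self_mem_Ici)
  simpa only [hzero] using hle₀

lemma sandwichTrace_lower_bound (hα : α ∈ Set.Ico (1 / 2 : ℝ) 1) {ε : ℝ} (hε : 0 ≤ ε)
    (hM₁ : M₁.PosSemidef) (hM₂ : M₂.PosSemidef) (hN₁ : N₁.PosSemidef) (hN₂ : N₂.PosSemidef) :
    (1 + ε) ^ (α - 1) * (sandwichTrace α M₁ N₁ + ε * sandwichTrace α M₂ N₂) ≤
      sandwichTrace α (M₁ + ε • M₂) ((1 / (1 + ε)) • N₁ + (ε / (1 + ε)) • N₂) := by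
  have hα' : α ∈ Set.Ioo (0 : ℝ) 1 := ⟨one_half_pos.trans_le hα.1, hα.2⟩
  have hε1 : 0 ≤ 1 + ε := add_nonneg zero_le_one hε
  have hθ : (1 / (1 + ε)) • N₁ + (ε / (1 + ε)) • N₂ = (1 + ε)⁻¹ • (N₁ + ε • N₂) := by
    rw [smul_add, smul_smul, one_div, div_eq_inv_mul]
  have hM := hM₁.add (hM₂.smul hε)
  have hN := hN₁.add (hN₂.smul hε)
  have hscale₂ : sandwichTrace α (ε • M₂) (ε • N₂) = ε * sandwichTrace α M₂ N₂ := by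
    rw [sandwichTrace_smul_smul hα' hε hε hM₂ hN₂,
      ← Real.rpow_add_of_nonneg hε hα'.1.le (sub_nonneg.mpr hα.2.le), add_sub_cancel, Real.rpow_one]
  have hscale : sandwichTrace α (M₁ + ε • M₂) ((1 + ε)⁻¹ • (N₁ + ε • N₂)) =
      (1 + ε) ^ (α - 1) * sandwichTrace α (M₁ + ε • M₂) (N₁ + ε • N₂) := by
    have := sandwichTrace_smul_smul hα' zero_le_one (inv_nonneg.mpr hε1) hM hN
    rwa [one_smul, Real.one_rpow, one_mul, Real.inv_rpow hε1, ← Real.rpow_neg hε1, neg_sub] at this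
  rw [hθ, hscale, ← hscale₂]
  exact mul_le_mul_of_nonneg_left (sandwichTrace_add_le hα hM₁ (hM₂.smul hε) hN₁ (hN₂.smul hε))
    (Real.rpow_nonneg hε1 _)

end SandwichTrace

section Conditional

variable {a b : Type*} [Fintype a] [DecidableEq a] [Fintype b] [DecidableEq b]

lemma sandTr_eq_sandwichTrace (α : ℝ) {ρ : Matrix (a × b) (a × b) ℂ} {η : Matrix b b ℂ}
    (hρ : ρ.PosSemidef) (hη : η.PosSemidef) :
    sandTr α ρ η = sandwichTrace α ρ ((1 : Matrix a a ℂ) ⊗ₖ η) := by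
  rw [sandTr, mpow_eq_rpow hη, one_kronecker_rpow hη,
    mpow_eq_rpow (posSemidef_rpow_mul_mul_rpow hρ _ _), sandwichTrace]

theorem sandTr_lower_bound_general {α : ℝ} (hα : α ∈ Set.Ico (1 / 2 : ℝ) 1)
    {σ P : Matrix (a × b) (a × b) ℂ} (hσ : σ.PosSemidef) (hP : P.PosSemidef)
    {ε : ℝ} (hε : 0 ≤ ε) {μ ν : Matrix b b ℂ} (hμ : μ.PosSemidef) (hν : ν.PosSemidef) :
    (1 + ε) ^ (α - 1) * (sandTr α σ μ + ε * sandTr α P ν) ≤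
      sandTr α (σ + ε • P) ((1 / (1 + ε)) • μ + (ε / (1 + ε)) • ν) := by
  have hε1 : 0 ≤ 1 + ε := add_nonneg zero_le_one hε
  have hθ : ((1 / (1 + ε)) • μ + (ε / (1 + ε)) • ν).PosSemidef :=
    (hμ.smul (one_div_nonneg.mpr hε1)).add (hν.smul (div_nonneg hε hε1))
  rw [sandTr_eq_sandwichTrace α hσ hμ, sandTr_eq_sandwichTrace α hP hν,
    sandTr_eq_sandwichTrace α (hσ.add (hP.smul hε)) hθ, kronecker_add, kronecker_smul,
    kronecker_smul]
  exact sandwichTrace_lower_bound hα hε hσ hP (PosSemidef.one.kronecker hμ)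
    (PosSemidef.one.kronecker hν)

end Conditional

end

/-- Key lower bound in the proof of Theorem 1 of Marwah–Dupuis: with
`θ = (1/(1+ε))μ + (ε/(1+ε))ν`,
`tr((θ^{-α'/2}(σ+εP)θ^{-α'/2})^α) ≥ (1+ε)^{α-1}[tr((μ^{-α'/2}σμ^{-α'/2})^α) + ε tr((ν^{-α'/2}Pν^{-α'/2})^α)]`. -/
theorem sandTr_lower_bound {dA dB : ℕ} (α : ℝ) (hα : α ∈ Set.Ico (1/2 : ℝ) 1)
    (σ P : Matrix (Fin dA × Fin dB) (Fin dA × Fin dB) ℂ)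
    (hσ : IsDensity σ) (hP : IsDensity P)
    (ε : ℝ) (hε : 0 < ε)
    (μ ν : Matrix (Fin dB) (Fin dB) ℂ) (hμ : IsDensity μ) (hν : IsDensity ν) :
    (1+ε) ^ (α-1) * (sandTr α σ μ + ε * sandTr α P ν) ≤
      sandTr α (σ + ε • P) ((1/(1+ε)) • μ + (ε/(1+ε)) • ν) :=
  sandTr_lower_bound_general hα hσ.1 hP.1 hε.le hμ.1 hν.1
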